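/- arXiv:math/0702671 — 2 statements merged into one kernel-verified Lean document; each statement's English description precedes it below -/
import Mathlib

section
/- Let W be a finite group acting on a commutative ring A by ring automorphisms, with |W| invertible in A, and let B = A^W be the subring of W-invariant elements. Let I be an ideal of B and let M be an A-module equipped with a W-action compatible with the W-action on A, i.e., each w ∈ W acts additively on M and w•(a·m) = (w•a)·(w•m) for all w ∈ W, a ∈ A, m ∈ M. Regard M and the invariant subgroup M^W as B-modules. Since every w ∈ W acts B-linearly on M, W acts on the I-adic completion of M (the inverse limit lim_k M/(Iᵏ·M)). Then the map induced by the inclusion M^W ↪ M, from the I-adic completion of the B-module M^W to the W-invariants of the I-adic completion of M, is a bijection (an isomorphism of modules over the I-adic completion of B). -/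
variable (W : Type*) [Group W] [Fintype W]
variable (A : Type*) [CommRing A] [MulSemiringAction W A]

/-- The subring `B = A^W` of `W`-invariant elements of `A`. -/
def fixedSubring : Subring A where
  carrier := {a | ∀ w : W, w • a = a}
  zero_mem' := fun w => smul_zero w
  one_mem' := fun w => smul_one w
  add_mem' := fun ha hb w => by rw [smul_add, ha w, hb w]
  mul_mem' := fun ha hb w => by rw [smul_mul', ha w, hb w]
  neg_mem' := fun ha w => by rw [smul_neg, ha w]

variable {M : Type*} [AddCommGroup M] [Module A M] [DistribMulAction W M]

/-- The `B = A^W`-submodule `M^W` of `W`-invariant elements of an `A`-module `M`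
carrying a compatible `W`-action. -/
def fixedSubmodule
    (compat : ∀ (w : W) (a : A) (m : M), w • (a • m) = (w • a) • (w • m)) :
    Submodule (fixedSubring W A) M where
  carrier := {m | ∀ w : W, w • m = m}
  zero_mem' := fun w => smul_zero w
  add_mem' := fun ha hb w => by rw [smul_add, ha w, hb w]
  smul_mem' := fun b m hm w => by
    show w • ((b : A) • m) = (b : A) • m
    rw [compat w (b : A) m, hm w, (b.2 : ∀ w : W, w • (b : A) = (b : A)) w]

/-- The action of `w ∈ W` on `M` as a `B = A^W`-linear map. -/
def wLinear (compat : ∀ (w : W) (a : A) (m : M), w • (a • m) = (w • a) • (w • m))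
    (w : W) : M →ₗ[fixedSubring W A] M where
  toFun m := w • m
  map_add' := smul_add w
  map_smul' := fun b m => by
    show w • ((b : A) • m) = (b : A) • (w • m)
    rw [compat w (b : A) m, (b.2 : ∀ w : W, w • (b : A) = (b : A)) w]

/-!
If `a : A` satisfies `∑ w, w • a = 1` (for instance `a = |W|⁻¹`), then `m ↦ ∑ w, w • (a • m)` is a
`B`-linear retraction of `M` onto `M^W`. The retraction is preserved by any functor, which gives
injectivity after completion. As an endomorphism of `M` it is `∑ w, (w • a) • w`, and completion is
additive on maps; hence on a `W`-invariant element of the completion it acts as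
multiplication by `∑ w, w • a = 1`, which gives surjectivity onto the invariants.
-/

section AdicCompletion

variable {R N P ι : Type*} [CommRing R] [AddCommGroup N] [Module R N] [AddCommGroup P] [Module R P]
  (I : Ideal R)

theorem adicCompletion_map_sum (s : Finset ι) (f : ι → N →ₗ[R] P) :
    AdicCompletion.map I (∑ i ∈ s, f i) = ∑ i ∈ s, AdicCompletion.map I (f i) := by
  refine AdicCompletion.map_ext' I fun a => AdicCompletion.ext fun n => ?_
  simp [AdicCompletion.val_sum_apply, LinearMap.sum_apply]

theorem bijOn_adicCompletion_map_of_comp_eq_sum [Fintype ι] {f : N →ₗ[R] P} {r : P →ₗ[R] N}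
    {φ c : ι → P →ₗ[R] P} (hf : Function.Injective f) (hφf : ∀ i, φ i ∘ₗ f = f)
    (hfr : f ∘ₗ r = ∑ i, c i ∘ₗ φ i) (hc : ∑ i, c i = LinearMap.id) :
    Set.BijOn (AdicCompletion.map I f) Set.univ
      {x | ∀ i, AdicCompletion.map I (φ i) x = x} := by
  have hrf : r ∘ₗ f = LinearMap.id := by
    refine LinearMap.ext fun y => hf ?_
    calc f (r (f y)) = ∑ i, c i (φ i (f y)) := by simpa using LinearMap.congr_fun hfr (f y)
      _ = ∑ i, c i (f y) :=
        Finset.sum_congr rfl fun i _ => congrArg (c i) (LinearMap.congr_fun (hφf i) y)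
      _ = f y := by rw [← LinearMap.sum_apply, hc, LinearMap.id_apply]
  have hleft : Function.LeftInverse (AdicCompletion.map I r) (AdicCompletion.map I f) := fun y => by
    rw [AdicCompletion.map_comp_apply, hrf, AdicCompletion.map_id, LinearMap.id_apply]
  refine ⟨fun y _ i => by rw [AdicCompletion.map_comp_apply, hφf], hleft.injective.injOn,
    fun x hx => ⟨AdicCompletion.map I r x, Set.mem_univ _, ?_⟩⟩
  calc AdicCompletion.map I f (AdicCompletion.map I r x)
      = ∑ i, AdicCompletion.map I (c i) (AdicCompletion.map I (φ i) x) := by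
        simp only [AdicCompletion.map_comp_apply, hfr, adicCompletion_map_sum, LinearMap.sum_apply]
    _ = ∑ i, AdicCompletion.map I (c i) x := Finset.sum_congr rfl fun i _ => by rw [hx i]
    _ = x := by
        rw [← LinearMap.sum_apply, ← adicCompletion_map_sum, hc, AdicCompletion.map_id,
          LinearMap.id_apply]

end AdicCompletion

section Invariants

variable {W A}

theorem exists_sum_smul_eq_one_of_isUnit_card (hinv : IsUnit (Fintype.card W : A)) :
    ∃ a : A, ∑ w : W, w • a = 1 := by
  obtain ⟨a, ha⟩ := hinv.exists_right_inv
  have smul_card (w : W) : w • (Fintype.card W : A) = Fintype.card W :=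
    map_natCast (MulSemiringAction.toRingHom W A w) _
  refine ⟨a, hinv.mul_left_cancel ?_⟩
  calc (Fintype.card W : A) * ∑ w : W, w • a
      = ∑ w : W, w • ((Fintype.card W : A) * a) := by
        simp only [Finset.mul_sum, smul_mul', smul_card]
    _ = Fintype.card W * 1 := by simp [ha]

variable (compat : ∀ (w : W) (a : A) (m : M), w • (a • m) = (w • a) • (w • m))

/-- The trace (transfer) map `M → M^W`, `m ↦ ∑ w, w • m`, with no division by `|W|`, as a map of
`A^W`-modules. -/
def invariantsTrace : M →ₗ[fixedSubring W A] fixedSubmodule W A compat :=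
  LinearMap.codRestrict _ (∑ w : W, wLinear W A compat w) fun m v => by
    rw [LinearMap.sum_apply, Finset.smul_sum]
    exact Fintype.sum_equiv (Equiv.mulLeft v) _ _ fun w => smul_smul v w m

theorem subtype_comp_invariantsTrace :
    (fixedSubmodule W A compat).subtype ∘ₗ invariantsTrace compat =
      ∑ w : W, wLinear W A compat w :=
  LinearMap.subtype_comp_codRestrict _ _ _

omit [Fintype W] in
theorem wLinear_comp_subtype (w : W) :
    wLinear W A compat w ∘ₗ (fixedSubmodule W A compat).subtype =
      (fixedSubmodule W A compat).subtype :=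
  LinearMap.ext fun m => m.2 w

omit [Fintype W] in
theorem wLinear_comp_lsmul (w : W) (a : A) :
    wLinear W A compat w ∘ₗ Algebra.lsmul (fixedSubring W A) (fixedSubring W A) M a =
      Algebra.lsmul (fixedSubring W A) (fixedSubring W A) M (w • a) ∘ₗ wLinear W A compat w :=
  LinearMap.ext (compat w a)

theorem bijOn_adicCompletion_invariants_general {a : A} (ha : ∑ w : W, w • a = 1)
    (I : Ideal (fixedSubring W A)) :
    Set.BijOn (AdicCompletion.map I (fixedSubmodule W A compat).subtype) Set.univ
      {x : AdicCompletion I M | ∀ w : W, AdicCompletion.map I (wLinear W A compat w) x = x} := by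
  let mulBy : A →ₐ[fixedSubring W A] Module.End (fixedSubring W A) M := Algebra.lsmul _ _ M
  have hretract : (fixedSubmodule W A compat).subtype ∘ₗ invariantsTrace compat ∘ₗ mulBy a =
      ∑ w : W, mulBy (w • a) ∘ₗ wLinear W A compat w := by
    rw [← LinearMap.comp_assoc, subtype_comp_invariantsTrace]
    simp only [← Module.End.mul_eq_comp, Finset.sum_mul]
    exact Finset.sum_congr rfl fun w _ => wLinear_comp_lsmul compat w a
  have hsum : ∑ w : W, mulBy (w • a) = LinearMap.id := by
    rw [← map_sum, ha, map_one, Module.End.one_eq_id]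
  exact bijOn_adicCompletion_map_of_comp_eq_sum I (Submodule.subtype_injective _)
    (wLinear_comp_subtype compat) hretract hsum

end Invariants

/-- Let `W` be a finite group acting on a commutative ring `A` with `|W|` invertible in
`A`, let `B = A^W`, `I ⊆ B` an ideal, and `M` an `A`-module with compatible `W`-action.
Then the map induced by the inclusion `M^W ↪ M`, from the `I`-adic completion of the
`B`-module `M^W` to the `W`-invariants of the `I`-adic completion of `M`, is a
bijection. -/
theorem bijOn_adicCompletion_invariants
    (hinv : IsUnit ((Fintype.card W : A)))
    (compat : ∀ (w : W) (a : A) (m : M), w • (a • m) = (w • a) • (w • m))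
    (I : Ideal (fixedSubring W A)) :
    Set.BijOn
      ⇑(AdicCompletion.map I ((fixedSubmodule W A compat).subtype) :
          AdicCompletion I (fixedSubmodule W A compat) →ₗ[AdicCompletion I (fixedSubring W A)]
            AdicCompletion I M)
      Set.univ
      {x : AdicCompletion I M | ∀ w : W, AdicCompletion.map I (wLinear W A compat w) x = x} := by
  obtain ⟨a, ha⟩ := exists_sum_smul_eq_one_of_isUnit_card hinv
  exact bijOn_adicCompletion_invariants_general compat ha I
end

section
/- Let W be a finite group acting on a commutative ring A by ring automorphisms, with |W| invertible in A, let B = A^W be the invariant subring, let I be an ideal of B, and let M be an A-module equipped with a W-action compatible with the W-action on A (each w acts additively and w•(a·m) = (w•a)·(w•m)). Regard M and M^W as B-modules. Then for every natural number k, the map induced by the inclusion M^W ↪ M, from the quotient M^W/(Iᵏ·M^W) to the W-invariants (M/(Iᵏ·M))^W of the quotient M/(Iᵏ·M), is a bijection. -/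
variable (W : Type*) [Group W] [Fintype W]
variable (A : Type*) [CommRing A] [MulSemiringAction W A]

variable {M : Type*} [AddCommGroup M] [Module A M] [DistribMulAction W M]

/-!
Over `B = A^W` the `W`-action on `M` is a linear representation, and `|W|` is already invertible
in `B`, so averaging over `W` is a `B`-linear retraction of `M` onto `M^W`. A `B`-linear retraction
carries `J • M` into `J • M^W` for every ideal `J` of `B`, which gives injectivity. Averaging also
commutes with the projection `M → M/(J • M)`, so averaging any lift of an invariant class produces
an invariant lift, which gives surjectivity.
-/

section SMulTop

variable {R N M : Type*} [Ring R] [AddCommGroup N] [Module R N] [AddCommGroup M] [Module R M]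

theorem mapQ_smul_top_injective_of_leftInverse {i : N →ₗ[R] M} {r : M →ₗ[R] N}
    (hri : Function.LeftInverse r i) (J : Ideal R) :
    Function.Injective
      (Submodule.mapQ (J • ⊤) (J • ⊤) i (Submodule.smul_top_le_comap_smul_top J i)) := by
  let r' := Submodule.mapQ (J • ⊤) (J • ⊤) r (Submodule.smul_top_le_comap_smul_top J r)
  refine Function.LeftInverse.injective (g := r') fun x ↦ ?_
  obtain ⟨n, rfl⟩ := Submodule.Quotient.mk_surjective _ x
  exact congrArg Submodule.Quotient.mk (hri n)

end SMulTop

section Averaging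

variable {k G V U : Type*} [CommRing k] [Group G] [AddCommGroup V] [Module k V]
  [AddCommGroup U] [Module k U] {ρ : Representation k G V} {σ : Representation k G U}

theorem intertwiningMap_averageMap [Fintype G] [Invertible (Fintype.card G : k)]
    (f : ρ.IntertwiningMap σ) (v : V) : f (ρ.averageMap v) = σ.averageMap (f v) := by
  simp [GroupAlgebra.average, f.isIntertwining]

theorem surjOn_invariants_of_surjective [Fintype G] [Invertible (Fintype.card G : k)]
    {f : ρ.IntertwiningMap σ} (hf : Function.Surjective f) :
    Set.SurjOn f ρ.invariants σ.invariants := by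
  intro u hu
  obtain ⟨v, rfl⟩ := hf u
  exact ⟨ρ.averageMap v, ρ.averageMap_invariant v,
    (intertwiningMap_averageMap f v).trans (σ.averageMap_id _ hu)⟩

theorem bijOn_quotient_invariants_general [Fintype G] (hG : IsUnit (Fintype.card G : k))
    (ρ : Representation k G V) (J : Ideal k) :
    Set.BijOn
      (Submodule.mapQ (J • ⊤) (J • ⊤) ρ.invariants.subtype
        (Submodule.smul_top_le_comap_smul_top J _))
      Set.univ
      (ρ.quotient (J • ⊤) fun g ↦ Submodule.smul_top_le_comap_smul_top J (ρ g)).invariants := by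
  let := hG.invertible
  have hJ (g : G) := Submodule.smul_top_le_comap_smul_top J (ρ g)
  refine ⟨fun x _ g ↦ ?_, Function.Injective.injOn ?_, fun x hx ↦ ?_⟩
  · obtain ⟨v, rfl⟩ := Submodule.Quotient.mk_surjective _ x
    exact congrArg Submodule.Quotient.mk (v.2 g)
  · exact mapQ_smul_top_injective_of_leftInverse (i := ρ.invariants.subtype)
      ρ.isProj_averageMap.codRestrict_apply_cod J
  · let π : ρ.IntertwiningMap (ρ.quotient (J • ⊤) hJ) := ⟨Submodule.mkQ _, fun _ ↦ rfl⟩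
    have hπ : Function.Surjective π := Submodule.mkQ_surjective _
    obtain ⟨v, hv, rfl⟩ := surjOn_invariants_of_surjective hπ hx
    exact ⟨Submodule.Quotient.mk ⟨v, hv⟩, Set.mem_univ _, rfl⟩

end Averaging

omit [Fintype W] in
theorem isLocalHom_subtype_fixedSubring : IsLocalHom (fixedSubring W A).subtype where
  map_nonunit a ha := by
    obtain ⟨b, hab : (a : A) * b = 1⟩ := ha.exists_right_inv
    have hb (w : W) : w • b = b := by
      refine ha.mul_left_cancel ?_
      calc (a : A) * w • b = w • (a * b) := by rw [smul_mul', a.2 w]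
        _ = a * b := by rw [hab, smul_one]
    exact IsUnit.of_mul_eq_one ⟨b, hb⟩ (Subtype.ext hab)

/-- The action of `W` on `M` as a linear representation over `B = A^W`. -/
def fixedSubringRepresentation
    (compat : ∀ (w : W) (a : A) (m : M), w • (a • m) = (w • a) • (w • m)) :
    Representation (fixedSubring W A) W M where
  toFun := wLinear W A compat
  map_one' := LinearMap.ext (one_smul W)
  map_mul' v w := LinearMap.ext (mul_smul v w)

/-- Let `W` be a finite group acting on a commutative ring `A` with `|W|` invertible in
`A`, let `B = A^W`, `I ⊆ B` an ideal, and `M` an `A`-module with compatible `W`-action.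
For every `k`, the map induced by the inclusion `M^W ↪ M`, from `M^W/(Iᵏ·M^W)` to the
`W`-invariants of `M/(Iᵏ·M)`, is a bijection. -/
theorem bijOn_quotient_invariants
    (hinv : IsUnit ((Fintype.card W : A)))
    (compat : ∀ (w : W) (a : A) (m : M), w • (a • m) = (w • a) • (w • m))
    (I : Ideal (fixedSubring W A)) (k : ℕ) :
    Set.BijOn
      ⇑(Submodule.mapQ
          (I ^ k • ⊤ : Submodule (fixedSubring W A) (fixedSubmodule W A compat))
          (I ^ k • ⊤ : Submodule (fixedSubring W A) M)
          (fixedSubmodule W A compat).subtype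
          (by
            rw [← Submodule.map_le_iff_le_comap, Submodule.map_smul'']
            exact Submodule.smul_mono le_rfl le_top))
      Set.univ
      {x : M ⧸ (I ^ k • ⊤ : Submodule (fixedSubring W A) M) |
        ∀ w : W,
          Submodule.mapQ
            (I ^ k • ⊤ : Submodule (fixedSubring W A) M)
            (I ^ k • ⊤ : Submodule (fixedSubring W A) M)
            (wLinear W A compat w)
            (by
              rw [← Submodule.map_le_iff_le_comap, Submodule.map_smul'']
              exact Submodule.smul_mono le_rfl le_top) x = x} := by
  have hB : IsUnit (Fintype.card W : fixedSubring W A) :=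
    (isLocalHom_subtype_fixedSubring W A).map_nonunit _ (by simpa using hinv)
  -- `fixedSubmodule` is definitionally the submodule of invariants of this representation.
  exact bijOn_quotient_invariants_general hB (fixedSubringRepresentation W A compat) (I ^ k)
end
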